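/- (Potential walls for two-dimensional objects, case C.) Assume κ := k + Σ_i ξ_i ≠ 0. Define D := z/x + (Δ_L·Δ_L)/2 − ( (xχ − rz)/x + Δ'·Δ_L + (a_L + Σ_i η_i)(p − (e/2)k + Σ_i ξ_i(θ_i + e/2)) )·(a_L + Σ_i η_i)/κ. Then there exists λ₀ ∈ (0,1) such that for each λ ∈ (0,λ₀) there is a unique real number Q(λ) with (λ, Q(λ)) on the potential wall W(e^L ch, e^L ch'), and 2λ·Q(λ) → D as λ → 0⁺. In particular, if D ≠ 0 the wall is asymptotic to q = D/(2λ) as λ → 0⁺, and if D = 0 then Q(λ) remains bounded as λ → 0⁺. -/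

import Mathlib

open Set Filter

/-!
Along the segment `H l = l • A + (1 - l) • f` with `f · f = 0` and `A · f = 1`, the square
`H l · H l` vanishes to first order at `l = 0`. For `ch = (x, 0, z)` and `ch' = (r, c, χ)` the wall
equation reduces to
`(H · H) (c · H) q = (z / x + (L · L) / 2) (c · H) - ((x χ - r z) / x + L · c) (L · H)`,
a linear equation in `q` whose leading coefficient has a simple zero at `l = 0`. Its solution
therefore has at most a simple pole, with residue read off at `H 0 = f`, and stays bounded when the
residue vanishes. The classes `Δ` arise by projecting `L` and `c` to the orthogonal complement of
`Θ` and `f`: in the residue, `Θ · L` cancels between `L · L` and `L · c`.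
-/

section LinearEquation

variable {u b : ℝ → ℝ}

theorem tendsto_mul_div_mul_nhdsNE_zero (hu : ContinuousAt u 0) (hu0 : u 0 ≠ 0)
    (hb : ContinuousAt b 0) :
    Tendsto (fun l => l * (b l / (l * u l))) (nhdsWithin 0 {0}ᶜ) (nhds (b 0 / u 0)) := by
  refine ((hb.div hu hu0).tendsto.mono_left nhdsWithin_le_nhds).congr' ?_
  filter_upwards [self_mem_nhdsWithin] with l hl
  rw [Pi.div_apply, mul_div_assoc', mul_div_mul_left _ _ hl]

theorem tendsto_div_mul_nhdsNE_zero (hu : ContinuousAt u 0) (hu0 : u 0 ≠ 0)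
    (hb : DifferentiableAt ℝ b 0) (hb0 : b 0 = 0) :
    Tendsto (fun l => b l / (l * u l)) (nhdsWithin 0 {0}ᶜ) (nhds (deriv b 0 / u 0)) := by
  have hslope : Tendsto (fun l => l⁻¹ * b l) (nhdsWithin 0 {0}ᶜ) (nhds (deriv b 0)) := by
    simpa only [zero_add, hb0, sub_zero, smul_eq_mul] using hb.hasDerivAt.tendsto_slope_zero
  refine (hslope.div (hu.tendsto.mono_left nhdsWithin_le_nhds) hu0).congr fun l => ?_
  rw [Pi.div_apply, inv_mul_eq_div, div_div]

theorem exists_eventually_abs_div_mul_le (hu : ContinuousAt u 0) (hu0 : u 0 ≠ 0)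
    (hb : DifferentiableAt ℝ b 0) (hb0 : b 0 = 0) :
    ∃ M : ℝ, ∀ᶠ l in nhdsWithin 0 {0}ᶜ, |b l / (l * u l)| ≤ M :=
  ⟨|deriv b 0 / u 0| + 1, (tendsto_div_mul_nhdsNE_zero hu hu0 hb hb0).abs.eventually_le_const
    (lt_add_one _)⟩

theorem exists_solution_asymptotics_of_simple_zero (hu : ContinuousAt u 0) (hu0 : u 0 ≠ 0)
    (hb : DifferentiableAt ℝ b 0) :
    ∃ l₀ ∈ Ioo (0 : ℝ) 1, ∃ Q : ℝ → ℝ,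
      (∀ l ∈ Ioo (0 : ℝ) l₀, ∀ q : ℝ, l * u l * q = b l ↔ q = Q l) ∧
      Tendsto (fun l => l * Q l) (nhdsWithin 0 (Ioo (0 : ℝ) l₀)) (nhds (b 0 / u 0)) ∧
      (b 0 = 0 → ∃ M : ℝ, ∀ l ∈ Ioo (0 : ℝ) l₀, |Q l| ≤ M) := by
  obtain ⟨M, hM⟩ : ∃ M : ℝ, ∀ᶠ l in nhdsWithin 0 {0}ᶜ, b 0 = 0 → |b l / (l * u l)| ≤ M := by
    by_cases hb0 : b 0 = 0
    · simpa only [hb0, forall_const] using exists_eventually_abs_div_mul_le hu hu0 hb hb0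
    · exact ⟨0, .of_forall fun _ h => absurd h hb0⟩
  have hne : ∀ᶠ l in nhdsWithin 0 {0}ᶜ, u l ≠ 0 := (hu.eventually_ne hu0).filter_mono
    nhdsWithin_le_nhds
  have hright := (hne.and hM).filter_mono (nhdsGT_le_nhdsNE (0 : ℝ))
  obtain ⟨l₀, ⟨hl₀, hl₀_le⟩, hgood⟩ :=
    (mem_nhdsGT_iff_exists_mem_Ioc_Ioo_subset (one_half_pos (α := ℝ))).mp hright
  refine ⟨l₀, ⟨hl₀, hl₀_le.trans_lt one_half_lt_one⟩, fun l => b l / (l * u l), ?_, ?_, ?_⟩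
  · intro l hl q
    rw [eq_div_iff (mul_ne_zero hl.1.ne' (hgood hl).1), mul_comm q]
  · exact (tendsto_mul_div_mul_nhdsNE_zero hu hu0 hb.continuousAt).mono_left
      (nhdsWithin_mono 0 fun l hl => hl.1.ne')
  · exact fun hb0 => ⟨M, fun l hl => (hgood hl).2 hb0⟩

end LinearEquation

/-- A Chern character `(ch₀, ch₁, ch₂)` on a surface, with divisor classes in `N`. -/
structure ChernCharacter (N : Type*) where
  ch₀ : ℝ
  ch₁ : N
  ch₂ : ℝ

section Walls

variable {N : Type*} [AddCommGroup N] [Module ℝ N] (B : N →ₗ[ℝ] N →ₗ[ℝ] ℝ)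

/-- The action of `e^L` on Chern characters, where `B` is the intersection form. -/
noncomputable def ChernCharacter.twist (L : N) (c : ChernCharacter N) : ChernCharacter N where
  ch₀ := c.ch₀
  ch₁ := c.ch₁ + c.ch₀ • L
  ch₂ := c.ch₂ + B L c.ch₁ + c.ch₀ / 2 * B L L

/-- The central charge with polarization `H`, parameter `q` and vanishing B-field. -/
def centralCharge (H : N) (q : ℝ) (c : ChernCharacter N) : ℂ where
  re := -c.ch₂ + c.ch₀ * B H H * q
  im := B c.ch₁ H

/-- The potential wall of `c` and `c'`: the condition on `(H, q)` that their central charges are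
linearly dependent over `ℝ`. -/
def OnPotentialWall (H : N) (q : ℝ) (c c' : ChernCharacter N) : Prop :=
  (centralCharge B H q c).re * (centralCharge B H q c').im =
    (centralCharge B H q c').re * (centralCharge B H q c).im

theorem onPotentialWall_twist_iff {x : ℝ} (hx : x ≠ 0) (H L c : N) (z r χ q : ℝ) :
    OnPotentialWall B H q (.twist B L ⟨x, 0, z⟩) (.twist B L ⟨r, c, χ⟩) ↔
      B H H * B c H * q =
        (z / x + B L L / 2) * B c H - ((x * χ - r * z) / x + B L c) * B L H := by
  simp only [OnPotentialWall, centralCharge, ChernCharacter.twist, map_add, map_smul, map_zero,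
    LinearMap.add_apply, LinearMap.smul_apply, smul_eq_mul, zero_add, add_zero]
  field_simp
  constructor <;> intro h <;> linear_combination h

/-- The segment of polarizations `H_l` from `f` (at `l = 0`) to `A` (at `l = 1`). -/
def polarizationSegment (A f : N) (l : ℝ) : N := l • A + (1 - l) • f

theorem apply_polarizationSegment (C A f : N) (l : ℝ) :
    B C (polarizationSegment A f l) = l * B C A + (1 - l) * B C f := by
  simp only [polarizationSegment, map_add, map_smul, smul_eq_mul]

/-- The limit of `2 * l * q` along the wall, with `s = z / x` and `t = (x * χ - r * z) / x` for the
Chern characters `e^L (x, 0, z)` and `e^L (r, c, χ)`. It is meaningful only for `B c f ≠ 0`. -/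
noncomputable def wallCoefficient (f : N) (s t : ℝ) (L c : N) : ℝ :=
  s + B L L / 2 - (t + B L c) * B L f / B c f

variable {B}

theorem apply_polarizationSegment_self (hsymm : ∀ D D' : N, B D D' = B D' D) {A f : N}
    (hff : B f f = 0) (hAf : B A f = 1) (l : ℝ) :
    B (polarizationSegment A f l) (polarizationSegment A f l) = l * (2 * (1 - l) + l * B A A) := by
  rw [apply_polarizationSegment, hsymm _ A, hsymm _ f, apply_polarizationSegment,
    apply_polarizationSegment, hsymm f A, hff, hAf]
  ring

end Walls

section OrthogonalPart

variable {N : Type*} [AddCommGroup N] [Module ℝ N] (B : N →ₗ[ℝ] N →ₗ[ℝ] ℝ) (Θ f : N)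

/-- For `f · f = 0` and `Θ · f = 1`, the projection onto the orthogonal complement of the plane
spanned by `Θ` and `f`. A section `Θ'` with `Θ · Θ = -e` goes to `Θ' - Θ - (Θ · Θ' + e) f`. -/
def orthogonalPart : N →ₗ[ℝ] N :=
  LinearMap.id - (B.flip f).smulRight Θ - (B Θ - B Θ Θ • B.flip f).smulRight f

theorem orthogonalPart_apply (C : N) :
    orthogonalPart B Θ f C = C - B C f • Θ - (B Θ C - B Θ Θ * B C f) • f := rfl

variable {B Θ f}

theorem orthogonalPart_section (hΘf : B Θ f = 1) : orthogonalPart B Θ f Θ = 0 := by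
  rw [orthogonalPart_apply, hΘf]
  module

theorem orthogonalPart_fiber (hff : B f f = 0) (hΘf : B Θ f = 1) :
    orthogonalPart B Θ f f = 0 := by
  rw [orthogonalPart_apply, hff, hΘf]
  module

theorem apply_orthogonalPart_orthogonalPart (hsymm : ∀ D D' : N, B D D' = B D' D)
    (hff : B f f = 0) (hΘf : B Θ f = 1) (C C' : N) :
    B (orthogonalPart B Θ f C) (orthogonalPart B Θ f C') =
      B C C' - B C f * B Θ C' - B C' f * B Θ C + B Θ Θ * B C f * B C' f := by
  simp only [orthogonalPart_apply, map_sub, map_smul, LinearMap.sub_apply, LinearMap.smul_apply,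
    smul_eq_mul, hff, hΘf, hsymm f, hsymm C Θ]
  ring

theorem wallCoefficient_eq_orthogonalPart (hsymm : ∀ D D' : N, B D D' = B D' D)
    (hff : B f f = 0) (hΘf : B Θ f = 1) (L : N) {c : N} (hcf : B c f ≠ 0) (s t : ℝ) :
    wallCoefficient B f s t L c =
      s + B (orthogonalPart B Θ f L) (orthogonalPart B Θ f L) / 2
        - (t + B (orthogonalPart B Θ f c) (orthogonalPart B Θ f L)
            + B L f * (B Θ c - B Θ Θ / 2 * B c f)) * B L f / B c f := by
  simp only [wallCoefficient, apply_orthogonalPart_orthogonalPart hsymm hff hΘf, hsymm c L]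
  field_simp
  ring

section SectionCombination

variable {ι : Type*} [Fintype ι] {Θi : ι → N} (a b : ℝ) (η : ι → ℝ)

theorem section_combination_apply_fiber (hff : B f f = 0) (hΘf : B Θ f = 1)
    (hΘif : ∀ i, B (Θi i) f = 1) :
    B (a • Θ + b • f + ∑ i, η i • Θi i) f = a + ∑ i, η i := by
  simp [hff, hΘf, hΘif, LinearMap.sum_apply]

theorem section_apply_section_combination (hΘf : B Θ f = 1) :
    B Θ (a • Θ + b • f + ∑ i, η i • Θi i) = a * B Θ Θ + b + ∑ i, η i * B Θ (Θi i) := by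
  simp [hΘf]

theorem orthogonalPart_section_combination (hff : B f f = 0) (hΘf : B Θ f = 1) :
    orthogonalPart B Θ f (a • Θ + b • f + ∑ i, η i • Θi i) =
      ∑ i, η i • orthogonalPart B Θ f (Θi i) := by
  simp [orthogonalPart_section hΘf, orthogonalPart_fiber hff hΘf]

theorem wallCoefficient_of_section_combination (hsymm : ∀ D D' : N, B D D' = B D' D)
    (hff : B f f = 0) (hΘf : B Θ f = 1) (hΘif : ∀ i, B (Θi i) f = 1) {e : ℝ}
    (hΘΘ : B Θ Θ = -e) {k p : ℝ} {ξ : ι → ℝ} (hκ : k + ∑ i, ξ i ≠ 0) {L c : N}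
    (hL : L = a • Θ + b • f + ∑ i, η i • Θi i) (hc : c = k • Θ + p • f + ∑ i, ξ i • Θi i)
    (s t : ℝ) :
    wallCoefficient B f s t L c =
      s + B (∑ i, η i • orthogonalPart B Θ f (Θi i)) (∑ i, η i • orthogonalPart B Θ f (Θi i)) / 2
        - (t + B (∑ i, ξ i • orthogonalPart B Θ f (Θi i))
              (∑ i, η i • orthogonalPart B Θ f (Θi i))
            + (a + ∑ i, η i) * (p - e / 2 * k + ∑ i, ξ i * (B Θ (Θi i) + e / 2)))
          * (a + ∑ i, η i) / (k + ∑ i, ξ i) := by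
  have hLf : B L f = a + ∑ i, η i := hL ▸ section_combination_apply_fiber a b η hff hΘf hΘif
  have hcf : B c f = k + ∑ i, ξ i := hc ▸ section_combination_apply_fiber k p ξ hff hΘf hΘif
  have hΘc : B Θ c - B Θ Θ / 2 * B c f =
      p - e / 2 * k + ∑ i, ξ i * (B Θ (Θi i) + e / 2) := by
    rw [hcf, hc, section_apply_section_combination k p ξ hΘf, hΘΘ]
    simp only [mul_add, Finset.sum_add_distrib, ← Finset.sum_mul]
    ring
  rw [wallCoefficient_eq_orthogonalPart hsymm hff hΘf L (hcf ▸ hκ), hΘc, hLf, hcf, hL, hc,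
    orthogonalPart_section_combination a b η hff hΘf,
    orthogonalPart_section_combination k p ξ hff hΘf]

end SectionCombination

end OrthogonalPart

theorem potential_wall_asymptotics_dim_two_caseC_general
    {N : Type*} [AddCommGroup N] [Module ℝ N] {B : N →ₗ[ℝ] N →ₗ[ℝ] ℝ}
    (hsymm : ∀ D D' : N, B D D' = B D' D) {A f : N} (hff : B f f = 0) (hAf : B A f = 1)
    {x : ℝ} (hx : x ≠ 0) (z r χ : ℝ) (L : N) {c : N} (hcf : B c f ≠ 0) {D : ℝ}
    (hD : D = wallCoefficient B f (z / x) ((x * χ - r * z) / x) L c) :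
    ∃ l₀ ∈ Ioo (0 : ℝ) 1, ∃ Q : ℝ → ℝ,
      (∀ l ∈ Ioo (0 : ℝ) l₀,
        OnPotentialWall B (polarizationSegment A f l) (Q l)
          (.twist B L ⟨x, 0, z⟩) (.twist B L ⟨r, c, χ⟩) ∧
        ∀ q : ℝ, OnPotentialWall B (polarizationSegment A f l) q
          (.twist B L ⟨x, 0, z⟩) (.twist B L ⟨r, c, χ⟩) → q = Q l) ∧
      Tendsto (fun l => 2 * l * Q l) (nhdsWithin 0 (Ioo (0 : ℝ) l₀)) (nhds D) ∧
      (D = 0 → ∃ M : ℝ, ∀ l ∈ Ioo (0 : ℝ) l₀, |Q l| ≤ M) := by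
  let H := polarizationSegment A f
  let u : ℝ → ℝ := fun l => (2 * (1 - l) + l * B A A) * B c (H l)
  let b : ℝ → ℝ := fun l =>
    (z / x + B L L / 2) * B c (H l) - ((x * χ - r * z) / x + B L c) * B L (H l)
  have hu : ContinuousAt u 0 := by simp only [u, H, apply_polarizationSegment]; fun_prop
  have hb : DifferentiableAt ℝ b 0 := by simp only [b, H, apply_polarizationSegment]; fun_prop
  have hu0 : u 0 = 2 * B c f := by simp [u, H, apply_polarizationSegment]
  have hb0 : b 0 = D * B c f := by
    simp only [b, H, apply_polarizationSegment, hD, wallCoefficient]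
    field_simp
    ring
  obtain ⟨l₀, hl₀, Q, hQ, hlim, hbdd⟩ :=
    exists_solution_asymptotics_of_simple_zero hu (by simp [hu0, hcf]) hb
  have hwall : ∀ l ∈ Ioo (0 : ℝ) l₀, ∀ q : ℝ, OnPotentialWall B (H l) q
      (.twist B L ⟨x, 0, z⟩) (.twist B L ⟨r, c, χ⟩) ↔ q = Q l := fun l hl q => by
    rw [← hQ l hl, onPotentialWall_twist_iff B hx, apply_polarizationSegment_self hsymm hff hAf,
      mul_assoc l]
  refine ⟨l₀, hl₀, Q, fun l hl => ⟨(hwall l hl _).2 rfl, fun q => (hwall l hl q).1⟩, ?_,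
    fun hD0 => hbdd (by rw [hb0, hD0, zero_mul])⟩
  have hlim_eq : 2 * (b 0 / u 0) = D := by rw [hb0, hu0]; field_simp
  simpa only [hlim_eq, mul_assoc] using hlim.const_mul 2

/-- Potential walls in the `(λ,0,0,q)`-plane for two-dimensional objects,
case (C): `ch = (x, 0, z)` with `x ≠ 0`, `xz ≤ 0`,
`ch' = (r, kΘ + pf + Σᵢ ξᵢΘᵢ, χ)` with `κ = k + Σᵢ ξᵢ ≠ 0`. For small
`λ > 0` the potential wall `W(e^L ch, e^L ch')` meets each vertical line in
a unique point `(λ, Q(λ))`, and `2λQ(λ) → D`; in particular if `D ≠ 0` the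
wall is asymptotic to `q = D/(2λ)` and if `D = 0` then `Q(λ)` stays bounded
as `λ → 0⁺`. -/
theorem potential_wall_asymptotics_dim_two_caseC
    {ι : Type*} [Fintype ι] {N : Type*} [AddCommGroup N] [Module ℝ N]
    (B : N →ₗ[ℝ] N →ₗ[ℝ] ℝ) (hsymm : ∀ D D' : N, B D D' = B D' D)
    (e m : ℝ) (Θ f : N) (Θi : ι → N)
    (hΘΘ : B Θ Θ = -e) (hΘiΘi : ∀ i, B (Θi i) (Θi i) = -e)
    (hff : B f f = 0) (hΘf : B Θ f = 1) (hΘif : ∀ i, B (Θi i) f = 1)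
    (θ : ι → ℝ) (hθ : ∀ i, θ i = B Θ (Θi i))
    (Hl : ℝ → N) (hHl : ∀ l : ℝ, Hl l = l • (Θ + m • f) + (1 - l) • f)
    (g : ℝ → ℝ) (hg : ∀ l : ℝ, g l = B (Hl l) (Hl l))
    (x z r k p χ aL bL : ℝ) (ξ η : ι → ℝ)
    (hx : x ≠ 0) (hBog : x * z ≤ 0)
    (κ : ℝ) (hκ : κ = k + ∑ i, ξ i) (hκne : κ ≠ 0)
    (Δi : ι → N) (hΔi : ∀ i, Δi i = Θi i - Θ - (θ i + e) • f)
    (ΔL Δ' : N) (hΔL : ΔL = ∑ i, η i • Δi i) (hΔ' : Δ' = ∑ i, ξ i • Δi i)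
    (L ch'1 : N)
    (hL : L = aL • Θ + bL • f + ∑ i, η i • Θi i)
    (hch'1 : ch'1 = k • Θ + p • f + ∑ i, ξ i • Θi i)
    (D : ℝ)
    (hD : D = z / x + B ΔL ΔL / 2
        - ((x * χ - r * z) / x + B Δ' ΔL
            + (aL + ∑ i, η i) * (p - e / 2 * k + ∑ i, ξ i * (θ i + e / 2)))
          * (aL + ∑ i, η i) / κ)
    (onWall : ℝ → ℝ → Prop)
    (honWall : ∀ l q : ℝ, onWall l q ↔
      (-(z + B L (0 : N) + x / 2 * B L L) + x * g l * q)
          * B (ch'1 + r • L) (Hl l)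
        = (-(χ + B L ch'1 + r / 2 * B L L) + r * g l * q)
          * B ((0 : N) + x • L) (Hl l)) :
    ∃ l₀ ∈ Ioo (0 : ℝ) 1, ∃ Q : ℝ → ℝ,
      (∀ l ∈ Ioo (0 : ℝ) l₀, onWall l (Q l) ∧ ∀ q : ℝ, onWall l q → q = Q l) ∧
      Tendsto (fun l => 2 * l * Q l) (nhdsWithin 0 (Ioo (0 : ℝ) l₀))
        (nhds D) ∧
      (D = 0 → ∃ M : ℝ, ∀ l ∈ Ioo (0 : ℝ) l₀, |Q l| ≤ M) := by
  subst hκ hΔL hΔ'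
  have hΔi_eq : ∀ i, Δi i = orthogonalPart B Θ f (Θi i) := fun i => by
    rw [orthogonalPart_apply, hΔi, hθ, hΘΘ, hΘif, one_smul, mul_one, sub_neg_eq_add]
  have hcf : B ch'1 f ≠ 0 := by
    rwa [hch'1, section_combination_apply_fiber k p ξ hff hΘf hΘif]
  simp only [hΔi_eq, hθ, ← wallCoefficient_of_section_combination aL bL η hsymm hff hΘf hΘif hΘΘ
    hκne hL hch'1] at hD
  obtain rfl : onWall = fun l q => OnPotentialWall B (polarizationSegment (Θ + m • f) f l) q
      (.twist B L ⟨x, 0, z⟩) (.twist B L ⟨r, ch'1, χ⟩) := by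
    funext l q
    rw [honWall, hg, hHl]
    rfl
  exact potential_wall_asymptotics_dim_two_caseC_general hsymm hff (by simp [hΘf, hff]) hx z r χ L
    hcf hD
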